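/- Let a > 0 and let T_a ⊂ ℝ² be the open equilateral triangle with vertices (0,0), (a,0), (a/2, (√3/2)a). For every smooth function Ψ : ℝ² → ℝ with compact support contained in T_a, one has ∫_{ℝ²} ‖∇Ψ(x)‖² dx ≥ (16π²/(3a²)) · ∫_{ℝ²} Ψ(x)² dx. In particular, when the triangle has area π this Poincaré (Rayleigh-quotient) constant equals 4π/√3, so 4π/√3 is a lower bound for all Dirichlet eigenvalues of the area-π equilateral triangle. -/

import Mathlib

open Real MeasureTheory

/-- The open equilateral triangle with vertices `(0,0)`, `(a,0)`, `(a/2, (√3/2)a)`. -/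
noncomputable def eqTriangle (a : ℝ) : Set (ℝ × ℝ) :=
  interior (convexHull ℝ ({((0 : ℝ), (0 : ℝ)), (a, 0), (a / 2, Real.sqrt 3 / 2 * a)} : Set (ℝ × ℝ)))

/-- The integral of a directional derivative of a compactly supported `C¹` function vanishes. -/
lemma integral_fderiv_zero (F : ℝ × ℝ → ℝ) (hF : ContDiff ℝ 1 F) (hc : HasCompactSupport F)
    (v : ℝ × ℝ) : Integrable (fun p => fderiv ℝ F p v) ∧ ∫ p, fderiv ℝ F p v = 0 := by
  have hcont : Continuous (fun p => fderiv ℝ F p v) :=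
    (hF.continuous_fderiv one_ne_zero).clm_apply continuous_const
  have hi : Integrable (fun p => fderiv ℝ F p v) :=
    hcont.integrable_of_hasCompactSupport (hc.fderiv_apply ℝ v)
  have hFi : Integrable F := hF.continuous.integrable_of_hasCompactSupport hc
  refine ⟨hi, ?_⟩
  have := integral_mul_fderiv_eq_neg_fderiv_mul_of_integrable (𝕜 := ℝ) (μ := (volume : Measure (ℝ × ℝ)))
    (f := fun _ : ℝ × ℝ => (1 : ℝ)) (g := F) (v := v) (by simp) (by simpa using hi)
    (by simpa using hFi) (fun x _ => differentiableAt_const _)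
    (fun x _ => hF.differentiable one_ne_zero x)
  simpa using this

/-- Smoothness of `Ψ² A` when `A` is smooth near the support of `Ψ`. -/
lemma contDiff_sq_mul (Ψ A : ℝ × ℝ → ℝ) (hΨ : ContDiff ℝ (⊤ : ℕ∞) Ψ)
    (hA : ∀ p ∈ tsupport Ψ, ContDiffAt ℝ 1 A p) : ContDiff ℝ 1 (fun p => Ψ p ^ 2 * A p) := by
  rw [contDiff_iff_contDiffAt]
  intro p
  have h1 : ContDiff ℝ 1 Ψ := hΨ.of_le (by exact_mod_cast le_top)
  by_cases hp : p ∈ tsupport Ψ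
  · exact (h1.contDiffAt.pow 2).mul (hA p hp)
  · have h0 : Ψ =ᶠ[nhds p] 0 := notMem_tsupport_iff_eventuallyEq.mp hp
    have : (fun p => Ψ p ^ 2 * A p) =ᶠ[nhds p] fun _ => 0 := by
      filter_upwards [h0] with q hq
      simp [hq]
    exact contDiffAt_const.congr_of_eventuallyEq this

/-- Barta / Jacobi type inequality. -/
lemma barta (Ψ A B : ℝ × ℝ → ℝ) (l : ℝ) (hΨ : ContDiff ℝ (⊤ : ℕ∞) Ψ) (hc : HasCompactSupport Ψ)
    (hA : ∀ p ∈ tsupport Ψ, ContDiffAt ℝ 1 A p) (hB : ∀ p ∈ tsupport Ψ, ContDiffAt ℝ 1 B p)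
    (h : ∀ p ∈ tsupport Ψ,
      fderiv ℝ A p (1, 0) + fderiv ℝ B p (0, 1) + A p ^ 2 + B p ^ 2 = -l) :
    l * ∫ p, Ψ p ^ 2 ≤ ∫ p, ((fderiv ℝ Ψ p (1, 0)) ^ 2 + (fderiv ℝ Ψ p (0, 1)) ^ 2) := by
  have h1 : ContDiff ℝ 1 Ψ := hΨ.of_le (by exact_mod_cast le_top)
  have hsupp : ∀ C : ℝ × ℝ → ℝ, HasCompactSupport (fun p => Ψ p ^ 2 * C p) := by
    intro C
    refine hc.mono ?_
    intro p hp hz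
    exact hp (by simp [hz])
  obtain ⟨iA, zA⟩ := integral_fderiv_zero _ (contDiff_sq_mul Ψ A hΨ hA) (hsupp A) (1, 0)
  obtain ⟨iB, zB⟩ := integral_fderiv_zero _ (contDiff_sq_mul Ψ B hΨ hB) (hsupp B) (0, 1)
  have hd : ∀ v : ℝ × ℝ, Integrable (fun p => (fderiv ℝ Ψ p v) ^ 2) := by
    intro v
    have hcont : Continuous (fun p => fderiv ℝ Ψ p v) :=
      (h1.continuous_fderiv one_ne_zero).clm_apply continuous_const
    refine (hcont.pow 2).integrable_of_hasCompactSupport ((hc.fderiv_apply ℝ v).mono ?_)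
    intro p hp hz
    exact hp (by simpa using hz)
  have iΨ : Integrable (fun p => Ψ p ^ 2) := by
    refine (h1.continuous.pow 2).integrable_of_hasCompactSupport (hc.mono ?_)
    intro p hp hz
    exact hp (by simp [hz])
  have key : ∫ p, (l * Ψ p ^ 2 + (fderiv ℝ (fun p => Ψ p ^ 2 * A p) p (1, 0)
      + fderiv ℝ (fun p => Ψ p ^ 2 * B p) p (0, 1))) ≤
      ∫ p, ((fderiv ℝ Ψ p (1, 0)) ^ 2 + (fderiv ℝ Ψ p (0, 1)) ^ 2) := by
    refine integral_mono ((iΨ.const_mul l).add (iA.add iB)) ((hd _).add (hd _)) ?_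
    intro p
    dsimp only
    by_cases hp : p ∈ tsupport Ψ
    · have dΨ := (h1.differentiable one_ne_zero p).hasFDerivAt
      have dA := ((hA p hp).differentiableAt one_ne_zero).hasFDerivAt
      have dB := ((hB p hp).differentiableAt one_ne_zero).hasFDerivAt
      have eA : fderiv ℝ (fun p => Ψ p ^ 2 * A p) p = _ := ((dΨ.pow 2).mul dA).fderiv
      have eB : fderiv ℝ (fun p => Ψ p ^ 2 * B p) p = _ := ((dΨ.pow 2).mul dB).fderiv
      rw [eA, eB]
      have := h p hp
      simp
      nlinarith [sq_nonneg (fderiv ℝ Ψ p (1, 0) - Ψ p * A p),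
        sq_nonneg (fderiv ℝ Ψ p (0, 1) - Ψ p * B p), congrArg (fun t => Ψ p ^ 2 * t) this]
    · have h0 : Ψ =ᶠ[nhds p] 0 := notMem_tsupport_iff_eventuallyEq.mp hp
      have hz : ∀ C : ℝ × ℝ → ℝ, fderiv ℝ (fun p => Ψ p ^ 2 * C p) p = 0 := by
        intro C
        have : (fun p => Ψ p ^ 2 * C p) =ᶠ[nhds p] fun _ => 0 := by
          filter_upwards [h0] with q hq
          simp [hq]
        rw [this.fderiv_eq]
        simp
      rw [hz, hz, h0.eq_of_nhds]
      simp
      positivity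
  have iAB : Integrable (fun p => fderiv ℝ (fun p => Ψ p ^ 2 * A p) p (1, 0)
      + fderiv ℝ (fun p => Ψ p ^ 2 * B p) p (0, 1)) := iA.add iB
  rw [integral_add (iΨ.const_mul l) iAB, integral_add iA iB, zA, zB,
    integral_const_mul] at key
  linarith

lemma halfplane (α β c : ℝ) (h : α ^ 2 + β ^ 2 ≠ 0) (S : Set (ℝ × ℝ))
    (hS : ∀ p ∈ S, 0 ≤ α * p.1 + β * p.2 + c) :
    ∀ p ∈ interior (convexHull ℝ S), 0 < α * p.1 + β * p.2 + c := by
  intro p hp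
  let L : ℝ × ℝ →L[ℝ] ℝ := α • ContinuousLinearMap.fst ℝ ℝ ℝ + β • ContinuousLinearMap.snd ℝ ℝ ℝ
  have hL : ∀ q, L q = α * q.1 + β * q.2 := by intro q; simp [L]
  have hsurj : Function.Surjective L := by
    intro t
    refine ⟨(t * α / (α ^ 2 + β ^ 2), t * β / (α ^ 2 + β ^ 2)), ?_⟩
    rw [hL]
    field_simp
  have hsub : convexHull ℝ S ⊆ L ⁻¹' Set.Ici (-c) := by
    refine convexHull_min ?_ ((convex_Ici (-c)).linear_preimage L.toLinearMap)
    intro q hq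
    have := hS q hq
    simp only [Set.mem_preimage, Set.mem_Ici, hL]
    linarith
  have := interior_mono hsub hp
  rw [← (L.isOpenMap hsurj).preimage_interior_eq_interior_preimage L.continuous,
    interior_Ici, Set.mem_preimage, Set.mem_Ioi, hL] at this
  linarith

/-- Cotangent of an affine function, and its derivative. -/
lemma cot_aff (α β c : ℝ) (p : ℝ × ℝ) (h : sin (α * p.1 + β * p.2 + c) ≠ 0) :
    ContDiffAt ℝ 1 (fun p : ℝ × ℝ => cos (α * p.1 + β * p.2 + c) / sin (α * p.1 + β * p.2 + c)) p ∧
    ∀ v : ℝ × ℝ, fderiv ℝ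
      (fun p : ℝ × ℝ => cos (α * p.1 + β * p.2 + c) / sin (α * p.1 + β * p.2 + c)) p v =
      -(1 + (cos (α * p.1 + β * p.2 + c) / sin (α * p.1 + β * p.2 + c)) ^ 2)
        * (α * v.1 + β * v.2) := by
  constructor
  · refine ContDiffAt.div ?_ ?_ h <;> fun_prop
  · intro v
    have e : HasFDerivAt (fun p : ℝ × ℝ => α * p.1 + β * p.2 + c)
        (α • ContinuousLinearMap.fst ℝ ℝ ℝ + β • ContinuousLinearMap.snd ℝ ℝ ℝ) p :=
      ((hasFDerivAt_fst.const_mul α).add (hasFDerivAt_snd.const_mul β)).add_const c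
    have d := ((hasDerivAt_cos (α * p.1 + β * p.2 + c)).div
      (hasDerivAt_sin (α * p.1 + β * p.2 + c)) h)
    have := d.comp_hasFDerivAt p e
    have h2 : fderiv ℝ
      (fun p : ℝ × ℝ => cos (α * p.1 + β * p.2 + c) / sin (α * p.1 + β * p.2 + c)) p = _ :=
      this.fderiv
    rw [h2]
    simp
    field_simp
    ring

theorem stmt_1 (a : ℝ) (ha : 0 < a) :
    (∀ Ψ : ℝ × ℝ → ℝ, ContDiff ℝ (⊤ : ℕ∞) Ψ → HasCompactSupport Ψ → tsupport Ψ ⊆ eqTriangle a →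
      (∫ p : ℝ × ℝ, ((fderiv ℝ Ψ p (1, 0)) ^ 2 + (fderiv ℝ Ψ p (0, 1)) ^ 2)) ≥
        (16 * π ^ 2 / (3 * a ^ 2)) * ∫ p : ℝ × ℝ, (Ψ p) ^ 2) ∧
    (Real.sqrt 3 * a ^ 2 / 4 = π → 16 * π ^ 2 / (3 * a ^ 2) = 4 * π / Real.sqrt 3) := by
  obtain ⟨s, hs⟩ : ∃ s, s = Real.sqrt 3 := ⟨_, rfl⟩
  have hs2 : s ^ 2 = 3 := by rw [hs]; norm_num
  have hs0 : 0 < s := by rw [hs]; positivity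
  rw [← hs]
  constructor
  · intro Ψ hΨ hc hsub
    -- the frequency
    obtain ⟨k, hk⟩ : ∃ k, k = 2 * π / (s * a) := ⟨_, rfl⟩
    have hk0 : 0 < k := by rw [hk]; positivity
    have hkπ : k * (s * a / 2) = π := by rw [hk]; field_simp
    have hl : 16 * π ^ 2 / (3 * a ^ 2) = 4 * k ^ 2 := by
      rw [hk, div_pow, mul_pow s, hs2]; field_simp; ring
    have htri : ∀ p ∈ tsupport Ψ, 0 < 0 * p.1 + k * p.2 + 0 ∧
        0 < (k * s / 2) * p.1 + (-k / 2) * p.2 + 0 ∧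
        0 < (-k * s / 2) * p.1 + (-k / 2) * p.2 + π := by
      intro p hp
      have hp' := hsub hp
      unfold eqTriangle at hp'
      rw [← hs] at hp'
      have hk2 : 0 < k ^ 2 := by positivity
      refine ⟨halfplane _ _ _ ?_ _ ?_ p hp', halfplane _ _ _ ?_ _ ?_ p hp',
        halfplane _ _ _ ?_ _ ?_ p hp'⟩
      · positivity
      · rintro q (rfl | rfl | rfl)
        · simp
        · simp
        · simp; positivity
      · have : 0 < (k * s / 2) ^ 2 := by positivity
        nlinarith [sq_nonneg (-k / 2)]
      · rintro q (rfl | rfl | rfl)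
        · simp
        · simp; positivity
        · apply le_of_eq; ring
      · have : 0 < (k * s / 2) ^ 2 := by positivity
        nlinarith [sq_nonneg (-k / 2)]
      · rintro q (rfl | rfl | rfl)
        · simp; positivity
        · simp; nlinarith
        · apply le_of_eq; simp only; nlinarith
    have hsin : ∀ p ∈ tsupport Ψ, 0 < sin (0 * p.1 + k * p.2 + 0) ∧
        0 < sin ((k * s / 2) * p.1 + (-k / 2) * p.2 + 0) ∧
        0 < sin ((-k * s / 2) * p.1 + (-k / 2) * p.2 + π) := by
      intro p hp
      obtain ⟨h1, h2, h3⟩ := htri p hp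
      exact ⟨sin_pos_of_pos_of_lt_pi h1 (by linarith), sin_pos_of_pos_of_lt_pi h2 (by linarith),
        sin_pos_of_pos_of_lt_pi h3 (by linarith)⟩
    obtain ⟨c1, hc1⟩ : ∃ c : ℝ × ℝ → ℝ, c = fun p : ℝ × ℝ =>
      cos (0 * p.1 + k * p.2 + 0) / sin (0 * p.1 + k * p.2 + 0) := ⟨_, rfl⟩
    obtain ⟨c2, hc2⟩ : ∃ c : ℝ × ℝ → ℝ, c = fun p : ℝ × ℝ =>
      cos ((k * s / 2) * p.1 + (-k / 2) * p.2 + 0) /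
        sin ((k * s / 2) * p.1 + (-k / 2) * p.2 + 0) := ⟨_, rfl⟩
    obtain ⟨c3, hc3⟩ : ∃ c : ℝ × ℝ → ℝ, c = fun p : ℝ × ℝ =>
      cos ((-k * s / 2) * p.1 + (-k / 2) * p.2 + π) /
        sin ((-k * s / 2) * p.1 + (-k / 2) * p.2 + π) := ⟨_, rfl⟩
    have D1 : ∀ p ∈ tsupport Ψ, ContDiffAt ℝ 1 c1 p ∧ ∀ v : ℝ × ℝ, fderiv ℝ c1 p v =
        -(1 + c1 p ^ 2) * (0 * v.1 + k * v.2) := by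
      intro p hp; rw [hc1]; exact cot_aff _ _ _ p (hsin p hp).1.ne'
    have D2 : ∀ p ∈ tsupport Ψ, ContDiffAt ℝ 1 c2 p ∧ ∀ v : ℝ × ℝ, fderiv ℝ c2 p v =
        -(1 + c2 p ^ 2) * ((k * s / 2) * v.1 + (-k / 2) * v.2) := by
      intro p hp; rw [hc2]; exact cot_aff _ _ _ p (hsin p hp).2.1.ne'
    have D3 : ∀ p ∈ tsupport Ψ, ContDiffAt ℝ 1 c3 p ∧ ∀ v : ℝ × ℝ, fderiv ℝ c3 p v =
        -(1 + c3 p ^ 2) * ((-k * s / 2) * v.1 + (-k / 2) * v.2) := by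
      intro p hp; rw [hc3]; exact cot_aff _ _ _ p (hsin p hp).2.2.ne'
    have hcot : ∀ p ∈ tsupport Ψ, c1 p * c2 p + c2 p * c3 p + c1 p * c3 p = 1 := by
      intro p hp
      obtain ⟨h1, h2, h3⟩ := hsin p hp
      have e : (-k * s / 2) * p.1 + (-k / 2) * p.2 + π =
        π - ((0 * p.1 + k * p.2 + 0) + ((k * s / 2) * p.1 + (-k / 2) * p.2 + 0)) := by ring
      rw [hc1, hc2, hc3]
      dsimp only
      rw [e] at h3 ⊢
      generalize 0 * p.1 + k * p.2 + 0 = x at *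
      generalize (k * s / 2) * p.1 + (-k / 2) * p.2 + 0 = y at *
      rw [sin_pi_sub, sin_add] at h3
      rw [cos_pi_sub, sin_pi_sub, sin_add, cos_add]
      have := h3.ne'
      field_simp
      ring
    rw [ge_iff_le, hl]
    refine barta Ψ (fun p => (k * s / 2) * c2 p + (-k * s / 2) * c3 p)
      (fun p => k * c1 p + (-k / 2) * c2 p + (-k / 2) * c3 p) (4 * k ^ 2) hΨ hc ?_ ?_ ?_
    · intro p hp
      exact (contDiffAt_const.mul (D2 p hp).1).add (contDiffAt_const.mul (D3 p hp).1)
    · intro p hp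
      exact ((contDiffAt_const.mul (D1 p hp).1).add (contDiffAt_const.mul (D2 p hp).1)).add
        (contDiffAt_const.mul (D3 p hp).1)
    · intro p hp
      have f1 := ((D1 p hp).1.differentiableAt one_ne_zero).hasFDerivAt
      have f2 := ((D2 p hp).1.differentiableAt one_ne_zero).hasFDerivAt
      have f3 := ((D3 p hp).1.differentiableAt one_ne_zero).hasFDerivAt
      have eA : fderiv ℝ (fun p => (k * s / 2) * c2 p + (-k * s / 2) * c3 p) p = _ :=
        ((f2.const_mul (k * s / 2)).add (f3.const_mul (-k * s / 2))).fderiv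
      have eB : fderiv ℝ (fun p => k * c1 p + (-k / 2) * c2 p + (-k / 2) * c3 p) p = _ :=
        (((f1.const_mul k).add (f2.const_mul (-k / 2))).add (f3.const_mul (-k / 2))).fderiv
      rw [eA, eB]
      simp only [add_apply, smul_apply, smul_eq_mul,
        (D1 p hp).2, (D2 p hp).2, (D3 p hp).2]
      have := hcot p hp
      generalize c1 p = x at *
      generalize c2 p = y at *
      generalize c3 p = z at *
      linear_combination (-(k ^ 2) * y * z / 2 - k ^ 2 / 2) * hs2 - k ^ 2 * this
  · intro h
    rw [← h]
    field_simp
    nlinarith
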